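/- Let κ be a (P,ρ)-kernel on a locally finite weakly ranked poset (P,ρ), with left KLS function g and Chow function ℋ. Then for every s ≤ t in P, ℋ_{st}(x) = Σ over all chains s = p_0 < p_1 < ⋯ < p_m ≤ t (m ≥ 0) of the product (Π_{i=1}^{m} (g^rev_{p_{i−1}p_i}(x) − x·g_{p_{i−1}p_i}(x))/(x−1)) · g_{p_m t}(x). -/

import Mathlib

/-!
In the incidence algebra put `N = 1 + g κ̄`, which vanishes on the diagonal. As `κ̄ ℋ = -1`, the
Chow function solves `ℋ = g + N ℋ`. The powers of `N` eventually vanish on every interval, so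
`ℋ = ∑ₘ Nᵐ g`; expanding `Nᵐ` as a sum over chains gives the formula once the entries of `N` are
known. For `s < t` these are read off from `(x - 1) g κ̄ = g κ - x g = g^rev - x g`, since
`(x - 1) κ̄ = κ - x δ`.

The last identity says that `x - 1` divides `κ_{st}` for `s < t`. Indeed `κ^rev` and `κ` agree at
`x = 1`, so `κ(1)² = 1`, and a unipotent square root of `1` over a torsion-free ring is `1`: its
strictly upper part `n` satisfies `n² = -2n`, so `2ᵏ n = ± nᵏ⁺¹` vanishes on each interval for
large `k`.
-/

open Finset Polynomial
open scoped Classical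

noncomputable section

variable {α : Type*}

/-- Convolution product in the incidence algebra of a locally finite poset over `ℤ[x]`.
Only the values on intervals `s ≤ t` are relevant. -/
def conv [PartialOrder α] [LocallyFiniteOrder α] (a b : α → α → Polynomial ℤ) :
    α → α → Polynomial ℤ :=
  fun s t => ∑ w ∈ Finset.Icc s t, a s w * b w t

/-- The identity `δ` of the incidence algebra. -/
def dlt [PartialOrder α] : α → α → Polynomial ℤ :=
  fun s t => if s = t then 1 else 0

/-- The involution `a ↦ a^rev`, given by `(a^rev)_{st}(x) = x^{ρ_{st}} a_{st}(1/x)`. -/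
def rev (ρ : α → α → ℕ) (a : α → α → Polynomial ℤ) : α → α → Polynomial ℤ :=
  fun s t => (a s t).reflect (ρ s t)

/-- A weak rank function on a poset. -/
structure IsWeakRank [Preorder α] (ρ : α → α → ℕ) : Prop where
  pos : ∀ ⦃s t : α⦄, s < t → 0 < ρ s t
  add : ∀ ⦃s w t : α⦄, s ≤ w → w ≤ t → ρ s t = ρ s w + ρ w t

/-- `κ` is a `(P,ρ)`-kernel: it lies in `I_ρ(P)`, is `1` on the diagonal, and `κ⁻¹ = κ^rev`. -/
structure IsKernel [PartialOrder α] [LocallyFiniteOrder α] (ρ : α → α → ℕ)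
    (κ : α → α → Polynomial ℤ) : Prop where
  degLE : ∀ ⦃s t : α⦄, s ≤ t → (κ s t).natDegree ≤ ρ s t
  diag : ∀ s : α, κ s s = 1
  left : ∀ ⦃s t : α⦄, s ≤ t → conv (rev ρ κ) κ s t = dlt s t
  right : ∀ ⦃s t : α⦄, s ≤ t → conv κ (rev ρ κ) s t = dlt s t

/-- The reduced kernel `κ̄`: `κ̄_{st} = κ_{st}/(x-1)` for `s < t` and `κ̄_{ss} = -1`. -/
def red [PartialOrder α] (κ : α → α → Polynomial ℤ) : α → α → Polynomial ℤ :=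
  fun s t => if s = t then -1 else κ s t /ₘ (X - 1)

/-- `H` is the Chow function of `κ`, i.e. `H = -(κ̄)⁻¹`. -/
structure IsChow [PartialOrder α] [LocallyFiniteOrder α] (κ H : α → α → Polynomial ℤ) : Prop where
  left : ∀ ⦃s t : α⦄, s ≤ t → conv (red κ) H s t = -dlt s t
  right : ∀ ⦃s t : α⦄, s ≤ t → conv H (red κ) s t = -dlt s t

/-- `f` is the right KLS function of the kernel `κ`. -/
structure IsRightKLS [PartialOrder α] [LocallyFiniteOrder α] (ρ : α → α → ℕ)
    (κ f : α → α → Polynomial ℤ) : Prop where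
  diag : ∀ s : α, f s s = 1
  degLT : ∀ ⦃s t : α⦄, s < t → 2 * (f s t).natDegree < ρ s t
  rev_eq : ∀ ⦃s t : α⦄, s ≤ t → rev ρ f s t = conv κ f s t

/-- `g` is the left KLS function of the kernel `κ`. -/
structure IsLeftKLS [PartialOrder α] [LocallyFiniteOrder α] (ρ : α → α → ℕ)
    (κ g : α → α → Polynomial ℤ) : Prop where
  diag : ∀ s : α, g s s = 1
  degLT : ∀ ⦃s t : α⦄, s < t → 2 * (g s t).natDegree < ρ s t
  rev_eq : ∀ ⦃s t : α⦄, s ≤ t → rev ρ g s t = conv g κ s t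

/-- `p` is symmetric with center of symmetry `d/2`, i.e. `p(x) = x^d p(1/x)`. -/
def PolySymm (d : ℕ) (p : Polynomial ℤ) : Prop := p.natDegree ≤ d ∧ p.reflect d = p

/-- All coefficients of `p` are non-negative. -/
def PolyNonneg (p : Polynomial ℤ) : Prop := ∀ n, 0 ≤ p.coeff n

/-- The coefficient sequence of `p` is unimodal. -/
def PolyUnimodal (p : Polynomial ℤ) : Prop :=
  ∃ j, (∀ i < j, p.coeff i ≤ p.coeff (i + 1)) ∧ ∀ i, j ≤ i → p.coeff (i + 1) ≤ p.coeff i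

end

/-- The polynomial `(g^rev_{st}(x) - x·g_{st}(x))/(x-1)` (an exact quotient). -/
noncomputable def klsQ [PartialOrder α] (ρ : α → α → ℕ) (g : α → α → Polynomial ℤ) :
    α → α → Polynomial ℤ :=
  fun s t => (rev ρ g s t - X * g s t) /ₘ (X - 1)

section IncidenceAlgebra

variable {R α : Type*}

/-- The elements of the incidence algebra that vanish on the diagonal, in matrix terms the strictly
upper triangular ones. -/
def IsStrictlyUpper [Zero R] [LE α] (n : IncidenceAlgebra R α) : Prop :=
  ∀ s, n s s = 0

variable [PartialOrder α] [LocallyFiniteOrder α]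

namespace IsStrictlyUpper

theorem mul_apply_eq_sum_Ioc [NonUnitalNonAssocSemiring R] {n : IncidenceAlgebra R α}
    (hn : IsStrictlyUpper n) (b : IncidenceAlgebra R α) (s t : α) :
    (n * b) s t = ∑ w ∈ Ioc s t, n s w * b w t := by
  rw [IncidenceAlgebra.mul_apply]
  refine (sum_subset Ioc_subset_Icc_self fun w hw hw' ↦ ?_).symm
  obtain rfl : s = w := by
    by_contra hne
    exact hw' (mem_Ioc.2 ⟨lt_of_le_of_ne (mem_Icc.1 hw).1 hne, (mem_Icc.1 hw).2⟩)
  rw [hn, zero_mul]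

variable [DecidableEq α]

theorem pow_mul_apply_eq_zero [Semiring R] {n : IncidenceAlgebra R α} (hn : IsStrictlyUpper n)
    (b : IncidenceAlgebra R α) {k : ℕ} {s t : α} (hk : #(Icc s t) ≤ k) :
    (n ^ k * b) s t = 0 := by
  induction k generalizing s with
  | zero =>
    refine IncidenceAlgebra.apply_eq_zero_of_not_le (fun hst ↦ ?_) _
    exact (card_pos.2 ⟨s, left_mem_Icc.2 hst⟩).not_ge hk
  | succ k ih =>
    rw [pow_succ', mul_assoc, hn.mul_apply_eq_sum_Ioc]
    refine sum_eq_zero fun w hw ↦ ?_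
    obtain ⟨hsw, hwt⟩ := mem_Ioc.1 hw
    have hlt : #(Icc w t) < #(Icc s t) :=
      card_lt_card (Icc_ssubset_Icc_left (hsw.le.trans hwt) hsw le_rfl)
    rw [ih (by lia), mul_zero]

theorem apply_eq_sum_pow_mul_apply [Semiring R] {n g h : IncidenceAlgebra R α}
    (hn : IsStrictlyUpper n) (hrec : h = g + n * h) (s t : α) :
    h s t = ∑ m ∈ range #(Icc s t), (n ^ m * g) s t := by
  have hiter (k : ℕ) : h s t = ∑ m ∈ range k, (n ^ m * g) s t + (n ^ k * h) s t := by
    induction k with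
    | zero => simp
    | succ k ih =>
      have hstep : n ^ k * h = n ^ k * g + n ^ (k + 1) * h := by
        conv_lhs => rw [hrec]
        rw [mul_add, pow_succ, mul_assoc]
      rw [ih, sum_range_succ, hstep, IncidenceAlgebra.add_apply, add_assoc]
  rw [hiter #(Icc s t), hn.pow_mul_apply_eq_zero h le_rfl, add_zero]

end IsStrictlyUpper

theorem eq_one_of_mul_self_eq_one_of_diag_eq_one [DecidableEq α] [Ring R] [IsAddTorsionFree R]
    {a : IncidenceAlgebra R α} (ha : a * a = 1) (hdiag : ∀ s, a s s = 1) : a = 1 := by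
  have hstrict : IsStrictlyUpper (a - 1) := fun s ↦ by
    rw [IncidenceAlgebra.sub_apply, hdiag, IncidenceAlgebra.one_apply, if_pos rfl, sub_self]
  have hsq : (a - 1) * (a - 1) = (-2 : ℤ) • (a - 1) := by
    rw [sub_mul, mul_sub, ha]
    simp only [mul_one, one_mul, neg_smul, two_smul]
    abel
  have hpow (k : ℕ) : (a - 1) ^ k * (a - 1) = (-2 : ℤ) ^ k • (a - 1) := by
    induction k with
    | zero => simp
    | succ k ih => rw [pow_succ, mul_assoc, hsq, mul_smul_comm, ih, smul_smul, pow_succ']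
  refine sub_eq_zero.1 (IncidenceAlgebra.ext fun s t _ ↦ ?_)
  have hzero := hstrict.pow_mul_apply_eq_zero (a - 1) (le_refl #(Icc s t))
  rw [hpow, IncidenceAlgebra.constSMul_apply] at hzero
  exact (smul_eq_zero.1 hzero).resolve_left (pow_ne_zero _ (by norm_num))

end IncidenceAlgebra

section Chains

/-- The chains `u = p₀ < p₁ < ⋯ < pₘ` of length `m` starting at `u` in a finite poset, encoded as
strictly monotone maps from `Fin (m + 1)`. -/
noncomputable def chainsFrom {T : Type*} [Fintype T] [Preorder T] (m : ℕ) (u : T) :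
    Finset (Fin (m + 1) → T) :=
  {p | StrictMono p ∧ p 0 = u}

theorem mem_chainsFrom {T : Type*} [Fintype T] [Preorder T] {m : ℕ} {u : T}
    {p : Fin (m + 1) → T} : p ∈ chainsFrom m u ↔ StrictMono p ∧ p 0 = u := by
  simp [chainsFrom]

theorem chainsFrom_zero {T : Type*} [Fintype T] [Preorder T] (u : T) :
    chainsFrom 0 u = {fun _ ↦ u} := by
  ext p
  simp [mem_chainsFrom, Subsingleton.strictMono, funext_iff]

theorem sum_chainsFrom_succ {T M : Type*} [Fintype T] [Preorder T] [AddCommMonoid M]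
    (m : ℕ) (u : T) (F : (Fin (m + 2) → T) → M) :
    ∑ p ∈ chainsFrom (m + 1) u, F p =
      ∑ w with u < w, ∑ q ∈ chainsFrom m w, F (Fin.cons u q) := by
  rw [sum_sigma']
  refine sum_bij' (fun p _ ↦ ⟨p 1, Fin.tail p⟩) (fun x _ ↦ Fin.cons u x.2) ?_ ?_ ?_ ?_ ?_
  · intro p hp
    obtain ⟨hmono, rfl⟩ := mem_chainsFrom.1 hp
    simp only [mem_sigma, mem_filter, mem_univ, true_and, mem_chainsFrom]
    exact ⟨hmono Fin.zero_lt_one, hmono.comp Fin.strictMono_succ, rfl⟩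
  · rintro ⟨w, q⟩ hx
    simp only [mem_sigma, mem_filter, mem_univ, true_and, mem_chainsFrom] at hx
    obtain ⟨huw, hmono, rfl⟩ := hx
    exact mem_chainsFrom.2 ⟨strictMono_vecCons.2 ⟨huw, hmono⟩, rfl⟩
  · intro p hp
    obtain ⟨-, rfl⟩ := mem_chainsFrom.1 hp
    exact Fin.cons_self_tail p
  · rintro ⟨w, q⟩ hx
    simp only [mem_sigma, mem_chainsFrom] at hx
    obtain ⟨-, -, rfl⟩ := hx
    rfl
  · intro p hp
    obtain ⟨-, rfl⟩ := mem_chainsFrom.1 hp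
    rw [Fin.cons_self_tail]

variable {α : Type*}

theorem sum_Ioc_eq_sum_subtype_Icc {M : Type*} [Preorder α] [LocallyFiniteOrder α]
    [AddCommMonoid M] {s t : α} (u : Icc s t) (f : α → M) :
    ∑ w ∈ Ioc (u : α) t, f w = ∑ w : Icc s t with u < w, f w := by
  have hIoc : Ioc (u : α) t = {w ∈ Icc s t | (u : α) < w} := by
    ext w
    have hsu := (mem_Icc.1 u.2).1
    simp only [mem_Ioc, mem_filter, mem_Icc]
    exact ⟨fun h ↦ ⟨⟨hsu.trans h.1.le, h.2⟩, h.1⟩, fun h ↦ ⟨h.2, h.1.2⟩⟩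
  rw [hIoc, sum_filter, sum_filter, ← sum_coe_sort (Icc s t)]
  rfl

theorem IsStrictlyUpper.pow_mul_apply_eq_sum_chainsFrom {R : Type*} [CommSemiring R]
    [PartialOrder α] [LocallyFiniteOrder α] [DecidableEq α] {n : IncidenceAlgebra R α}
    (hn : IsStrictlyUpper n) (g : IncidenceAlgebra R α) {s t : α} (m : ℕ) (u : Icc s t) :
    (n ^ m * g) u t =
      ∑ p ∈ chainsFrom m u, (∏ i : Fin m, n (p i.castSucc) (p i.succ)) * g (p (Fin.last m)) t := by
  induction m generalizing u with
  | zero => simp [chainsFrom_zero]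
  | succ m ih =>
    rw [pow_succ', mul_assoc, hn.mul_apply_eq_sum_Ioc, sum_Ioc_eq_sum_subtype_Icc,
      sum_chainsFrom_succ]
    refine sum_congr rfl fun w _ ↦ ?_
    rw [ih, mul_sum]
    refine sum_congr rfl fun q hq ↦ ?_
    obtain ⟨-, rfl⟩ := mem_chainsFrom.1 hq
    rw [Fin.prod_univ_succ, mul_assoc]
    rfl

end Chains

section ToIncidence

variable {R α : Type*}

/-- The element of the incidence algebra with the values of `a` on intervals; the values of `a` at
pairs that are not intervals are discarded. -/
noncomputable def toIncidence [Zero R] [LE α] (a : α → α → R) : IncidenceAlgebra R α where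
  toFun s t := if s ≤ t then a s t else 0
  eq_zero_of_not_le' _ _ h := if_neg h

theorem toIncidence_apply [Zero R] [LE α] (a : α → α → R) {s t : α} (hst : s ≤ t) :
    toIncidence a s t = a s t :=
  if_pos hst

theorem toIncidence_mul_apply [NonUnitalNonAssocSemiring R] [Preorder α] [LocallyFiniteOrder α]
    (a b : α → α → R) (s t : α) :
    (toIncidence a * toIncidence b) s t = ∑ w ∈ Icc s t, a s w * b w t := by
  rw [IncidenceAlgebra.mul_apply]
  refine sum_congr rfl fun w hw ↦ ?_
  rw [toIncidence_apply a (mem_Icc.1 hw).1, toIncidence_apply b (mem_Icc.1 hw).2]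

end ToIncidence

theorem eval_one_reflect {R : Type*} [CommSemiring R] {p : R[X]} {d : ℕ} (hp : p.natDegree ≤ d) :
    (p.reflect d).eval 1 = p.eval 1 := by
  have := invertibleOne (α := R)
  simpa [eval₂_id] using eval₂_reflect_mul_pow (RingHom.id R) 1 d p hp

theorem monic_X_sub_one {R : Type*} [Ring R] : (X - 1 : R[X]).Monic := by
  simpa using monic_X_sub_C (1 : R)

section Kernel

variable {α : Type*} [PartialOrder α] [LocallyFiniteOrder α] {ρ : α → α → ℕ} {κ g H : α → α → ℤ[X]}

theorem IsKernel.eval_one_eq_zero (hκ : IsKernel ρ κ) {s t : α} (hst : s < t) :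
    (κ s t).eval 1 = 0 := by
  set κ₁ : IncidenceAlgebra ℤ α := toIncidence fun s t ↦ (κ s t).eval 1 with hκ₁
  have hsq : κ₁ * κ₁ = 1 := by
    ext s t hst
    calc (κ₁ * κ₁) s t
        = ∑ w ∈ Icc s t, (κ s w).eval 1 * (κ w t).eval 1 := toIncidence_mul_apply ..
      _ = ∑ w ∈ Icc s t, (κ s w).eval 1 * (rev ρ κ w t).eval 1 :=
          sum_congr rfl fun w hw ↦ by rw [rev, eval_one_reflect (hκ.degLE (mem_Icc.1 hw).2)]
      _ = (conv κ (rev ρ κ) s t).eval 1 := by simp only [conv, eval_finsetSum, eval_mul]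
      _ = (1 : IncidenceAlgebra ℤ α) s t := by
          rw [hκ.right hst, dlt, IncidenceAlgebra.one_apply, apply_ite (eval 1), eval_one,
            eval_zero]
  have hdiag (s : α) : κ₁ s s = 1 := by rw [hκ₁, toIncidence_apply _ le_rfl, hκ.diag, eval_one]
  have hone := eq_one_of_mul_self_eq_one_of_diag_eq_one hsq hdiag
  rw [← toIncidence_apply (fun s t ↦ (κ s t).eval 1) hst.le, ← hκ₁, hone,
    IncidenceAlgebra.one_apply, if_neg hst.ne]

theorem IsKernel.X_sub_one_mul_red (hκ : IsKernel ρ κ) {s t : α} (hst : s ≤ t) :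
    (X - 1) * red κ s t = κ s t - X * dlt s t := by
  obtain rfl | hlt := hst.eq_or_lt
  · simp [red, dlt, hκ.diag]
  · have hroot : (X - C 1) * (κ s t /ₘ (X - C 1)) = κ s t :=
      mul_divByMonic_eq_iff_isRoot.2 (hκ.eval_one_eq_zero hlt)
    simpa [red, dlt, hlt.ne] using hroot

theorem IsKernel.klsQ_eq_conv_red (hκ : IsKernel ρ κ) {s t : α} (hst : s ≤ t)
    (hrev : rev ρ g s t = conv g κ s t) : klsQ ρ g s t = conv g (red κ) s t := by
  have hmul : (X - 1) * conv g (red κ) s t = rev ρ g s t - X * g s t := by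
    calc (X - 1) * conv g (red κ) s t
        = ∑ w ∈ Icc s t, (g s w * κ w t - X * (g s w * dlt w t)) := by
          rw [conv, mul_sum]
          refine sum_congr rfl fun w hw ↦ ?_
          rw [mul_left_comm, hκ.X_sub_one_mul_red (mem_Icc.1 hw).2]
          ring
      _ = rev ρ g s t - X * g s t := by
          rw [sum_sub_distrib, ← mul_sum, hrev, conv]
          simp [dlt, hst]
  rw [klsQ, ← hmul, mul_divByMonic_cancel_left _ monic_X_sub_one]

theorem IsKernel.one_add_mul_red_apply (hκ : IsKernel ρ κ) {s t : α} (hst : s < t)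
    (hrev : rev ρ g s t = conv g κ s t) :
    (1 + toIncidence g * toIncidence (red κ)) s t = klsQ ρ g s t := by
  rw [hκ.klsQ_eq_conv_red hst.le hrev, IncidenceAlgebra.add_apply, toIncidence_mul_apply,
    IncidenceAlgebra.one_apply, if_neg hst.ne, zero_add, conv]

theorem isStrictlyUpper_one_add_mul_red (κ : α → α → ℤ[X]) (hdiag : ∀ s, g s s = 1) :
    IsStrictlyUpper (1 + toIncidence g * toIncidence (red κ)) := fun s ↦ by
  rw [IncidenceAlgebra.add_apply, toIncidence_mul_apply]
  simp [hdiag, red]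

theorem IsChow.red_mul (hH : IsChow κ H) : toIncidence (red κ) * toIncidence H = -1 := by
  refine IncidenceAlgebra.ext fun s t hst ↦ ?_
  rw [toIncidence_mul_apply]
  exact hH.left hst

theorem IsChow.toIncidence_eq_add_mul (hH : IsChow κ H) (g : IncidenceAlgebra ℤ[X] α) :
    toIncidence H = g + (1 + g * toIncidence (red κ)) * toIncidence H := by
  have hneg : g * (toIncidence (red κ) * toIncidence H) = -g := by
    rw [hH.red_mul]
    exact mul_neg_one g
  rw [add_mul, one_mul, mul_assoc, hneg, add_comm, neg_add_cancel_right]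

end Kernel

theorem chow_as_sum_over_chains_general {α : Type*} [PartialOrder α] [LocallyFiniteOrder α]
    {ρ : α → α → ℕ} {κ H g : α → α → ℤ[X]} (hκ : IsKernel ρ κ) (hH : IsChow κ H)
    (hdiag : ∀ s, g s s = 1) (hrev : ∀ ⦃s t⦄, s ≤ t → rev ρ g s t = conv g κ s t)
    {s t : α} (hst : s ≤ t) :
    H s t = ∑ m ∈ range #(Icc s t), ∑ p ∈ chainsFrom m (⟨s, left_mem_Icc.2 hst⟩ : Icc s t),
      (∏ i : Fin m, klsQ ρ g (p i.castSucc) (p i.succ)) * g (p (Fin.last m)) t := by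
  have hstrict := isStrictlyUpper_one_add_mul_red κ hdiag
  rw [← toIncidence_apply H hst,
    hstrict.apply_eq_sum_pow_mul_apply (hH.toIncidence_eq_add_mul (toIncidence g))]
  refine sum_congr rfl fun m _ ↦ ?_
  rw [hstrict.pow_mul_apply_eq_sum_chainsFrom (toIncidence g) m ⟨s, left_mem_Icc.2 hst⟩]
  refine sum_congr rfl fun p hp ↦ ?_
  rw [toIncidence_apply g (mem_Icc.1 (p (Fin.last m)).2).2]
  congr 1
  refine prod_congr rfl fun i _ ↦ ?_
  have hlt : p i.castSucc < p i.succ := (mem_chainsFrom.1 hp).1 i.castSucc_lt_succ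
  exact hκ.one_add_mul_red_apply hlt (hrev hlt.le)

/-- Theorem 3.9: the Chow function as a sum over chains
`s = p_0 < p_1 < ⋯ < p_m ≤ t`:
`ℋ_{st} = Σ (Π_{i=1}^m (g^rev_{p_{i-1}p_i} - x g_{p_{i-1}p_i})/(x-1)) · g_{p_m t}`. -/
theorem chow_as_sum_over_chains [PartialOrder α] [LocallyFiniteOrder α]
    (ρ : α → α → ℕ) (hρ : IsWeakRank ρ)
    (κ : α → α → Polynomial ℤ) (hκ : IsKernel ρ κ)
    (H : α → α → Polynomial ℤ) (hH : IsChow κ H)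
    (g : α → α → Polynomial ℤ) (hg : IsLeftKLS ρ κ g)
    (s t : α) (hst : s ≤ t) :
    H s t = ∑ m ∈ Finset.range (Finset.Icc s t).card,
      ∑ p ∈ Finset.univ.filter
          (fun p : Fin (m + 1) → ↥(Finset.Icc s t) => StrictMono p ∧ (p 0 : α) = s),
        (∏ i : Fin m, klsQ ρ g (p i.castSucc : α) (p i.succ : α))
          * g (p (Fin.last m) : α) t := by
  simpa only [chainsFrom, Subtype.ext_iff] using
    chow_as_sum_over_chains_general hκ hH hg.diag hg.rev_eq hst
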